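/- Let f : ℝ^d → ℝ be a convex function of at most linear growth, let p : ℝ^d → ℝ^d be a subgradient selection (f(y) ≥ f(x) + ⟨p(x), y − x⟩ for all x, y), and let Q(x) be the matrix of Radon–Nikodym derivatives of the absolutely continuous parts of the second derivative measures μ_{ij} of f. Then for Lebesgue-almost every x ∈ ℝ^d: lim_{t → 0⁺} (1/t) ∫_{ℝ^d} |f(x + y) − f(x) − ⟨p(x), y⟩| · φ_t(y) dy = (1/2) tr(Q(x)), where φ_t(y) = (2πt)^{−d/2} exp(−‖y‖²/(2t)). -/

import Mathlib

open MeasureTheory Filter Metric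
open scoped Topology ENNReal NNReal RealInnerProductSpace

/-- The `d`-dimensional Gaussian heat kernel `φ_t`. -/
noncomputable def heatKernel (d : ℕ) (t : ℝ) (y : EuclideanSpace ℝ (Fin d)) : ℝ :=
  (2 * Real.pi * t) ^ (-(d : ℝ) / 2) * Real.exp (-‖y‖ ^ 2 / (2 * t))

/-- The second partial derivative `∂_i ∂_j φ` at `x`. -/
noncomputable def secondPartial (d : ℕ) (φ : EuclideanSpace ℝ (Fin d) → ℝ)
    (i j : Fin d) (x : EuclideanSpace ℝ (Fin d)) : ℝ :=
  fderiv ℝ (fun z => fderiv ℝ φ z (EuclideanSpace.single j 1)) x (EuclideanSpace.single i 1)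

/-- `μp, μn` represent the (signed) second derivative measures `μ_{ij} = μp i j - μn i j`
of the function `f`. -/
def IsSecondDerivMeasures (d : ℕ) (f : EuclideanSpace ℝ (Fin d) → ℝ)
    (μp μn : Fin d → Fin d → Measure (EuclideanSpace ℝ (Fin d))) : Prop :=
  (∀ i j, IsLocallyFiniteMeasure (μp i j)) ∧ (∀ i j, IsLocallyFiniteMeasure (μn i j)) ∧
  ∀ i j, ∀ φ : EuclideanSpace ℝ (Fin d) → ℝ, ContDiff ℝ (⊤ : ℕ∞) φ → HasCompactSupport φ →
    (∫ x, φ x ∂(μp i j)) - (∫ x, φ x ∂(μn i j)) = ∫ x, f x * secondPartial d φ i j x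

/-- The matrix of Radon–Nikodym derivatives of the absolutely continuous parts of the
second derivative measures. -/
noncomputable def densityMatrix (d : ℕ)
    (μp μn : Fin d → Fin d → Measure (EuclideanSpace ℝ (Fin d)))
    (x : EuclideanSpace ℝ (Fin d)) : Matrix (Fin d) (Fin d) ℝ :=
  Matrix.of fun i j =>
    ((μp i j).rnDeriv volume x).toReal - ((μn i j).rnDeriv volume x).toReal

/-!
The subgradient inequality makes the increment `f (x + y) - f x - ⟪p x, y⟫` nonnegative, and its
linear part integrates to zero against the even kernel `φ_t`, so the quantity in question is
`(P_t f x - f x) / t` for the heat semigroup `P_t`. Gaussian tails are `o(t ^ k)` for every `k`, so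
`f` may be multiplied by a smooth cutoff `χ` equal to `1` near `x`. By the heat equation the time
derivative of `P_t (χ f) x` is `½ ∫ χ f Δφ_t(· - x)`, and moving the Laplacian onto `χ φ_t(· - x)`
costs only terms supported away from `x`; by the defining property of the second derivative measures
what remains is `½ ∑ i, ∫ χ φ_t(· - x) dμ_{ii}`. Integration by parts in the radius writes `φ_t` as
a mixture of indicators of balls centred at `x`, so these integrals tend to the density of `μ_{ii}`
at every point where the ball averages converge, which is almost every `x` by the Besicovitch
differentiation theorem.
L'Hôpital's rule transfers the limit from the derivative to the difference quotient.
-/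

section Laplacian

open Laplacian InnerProductSpace Gradient

variable {E : Type*} [NormedAddCommGroup E] [InnerProductSpace ℝ E]

theorem fderiv_fderiv_mul {F : Type*} [NormedAddCommGroup F] [NormedSpace ℝ F] {φ ψ : F → ℝ}
    (hφ : ContDiff ℝ 2 φ) (hψ : ContDiff ℝ 2 ψ) (v w : F) :
    fderiv ℝ (fun z => fderiv ℝ (fun y => φ y * ψ y) z v) w v =
      φ w * fderiv ℝ (fun z => fderiv ℝ ψ z v) w v + 2 * (fderiv ℝ φ w v * fderiv ℝ ψ w v) +
        ψ w * fderiv ℝ (fun z => fderiv ℝ φ z v) w v := by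
  have hφ₁ : Differentiable ℝ φ := hφ.differentiable (by norm_num)
  have hψ₁ : Differentiable ℝ ψ := hψ.differentiable (by norm_num)
  have hφ₂ : Differentiable ℝ fun z => fderiv ℝ φ z v :=
    ((hφ.fderiv_right (m := 1) (by norm_num)).differentiable (by norm_num)).clm_apply
      (differentiable_const v)
  have hψ₂ : Differentiable ℝ fun z => fderiv ℝ ψ z v :=
    ((hψ.fderiv_right (m := 1) (by norm_num)).differentiable (by norm_num)).clm_apply
      (differentiable_const v)
  have hfirst : (fun z => fderiv ℝ (fun y => φ y * ψ y) z v) =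
      fun z => φ z * fderiv ℝ ψ z v + ψ z * fderiv ℝ φ z v := by
    funext z
    rw [fderiv_fun_mul (hφ₁ z) (hψ₁ z)]
    rfl
  rw [hfirst, fderiv_fun_add ((hφ₁ w).fun_mul (hψ₂ w)) ((hψ₁ w).fun_mul (hφ₂ w)),
    fderiv_fun_mul (hφ₁ w) (hψ₂ w), fderiv_fun_mul (hψ₁ w) (hφ₂ w)]
  simp only [add_apply, smul_apply, smul_eq_mul]
  ring

theorem sum_fderiv_mul_fderiv [CompleteSpace E] {ι : Type*} [Fintype ι]
    (e : OrthonormalBasis ι ℝ E) (φ ψ : E → ℝ) (w : E) :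
    ∑ i, fderiv ℝ φ w (e i) * fderiv ℝ ψ w (e i) = fderiv ℝ φ w (∇ ψ w) := by
  conv_rhs => rw [← e.sum_repr' (∇ ψ w), map_sum]
  refine Finset.sum_congr rfl fun i _ => ?_
  rw [map_smul, smul_eq_mul, real_inner_comm, ← toDual_apply_apply (𝕜 := ℝ), toDual_gradient,
    mul_comm]

variable [FiniteDimensional ℝ E]

theorem laplacian_eq_sum_fderiv_fderiv {ι : Type*} [Fintype ι] (e : OrthonormalBasis ι ℝ E)
    {φ : E → ℝ} (hφ : ContDiff ℝ 2 φ) (w : E) :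
    Δ φ w = ∑ i, fderiv ℝ (fun z => fderiv ℝ φ z (e i)) w (e i) := by
  have hdiff : DifferentiableAt ℝ (fderiv ℝ φ) w :=
    (hφ.fderiv_right (m := 1) (by norm_num)).differentiable (by norm_num) w
  rw [laplacian_eq_iteratedFDeriv_orthonormalBasis φ e]
  refine Finset.sum_congr rfl fun i _ => ?_
  rw [iteratedFDeriv_two_apply, fderiv_clm_apply hdiff (differentiableAt_const _)]
  simp

theorem continuous_laplacian {φ : E → ℝ} (hφ : ContDiff ℝ 2 φ) : Continuous (Δ φ) := by
  rw [laplacian_eq_iteratedFDeriv_stdOrthonormalBasis]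
  exact continuous_finsetSum _ fun i _ =>
    (hφ.continuous_iteratedFDeriv le_rfl).eval_const _

theorem hasCompactSupport_laplacian {φ : E → ℝ} (hφ : HasCompactSupport φ) :
    HasCompactSupport (Δ φ) := by
  rw [laplacian_eq_iteratedFDeriv_stdOrthonormalBasis]
  refine (hφ.iteratedFDeriv (𝕜 := ℝ) 2).mono fun w hw hzero => hw ?_
  simp only [hzero, zero_apply, Finset.sum_const_zero]

theorem laplacian_comp_sub (φ : E → ℝ) (x w : E) :
    Δ (fun z => φ (z - x)) w = Δ φ (w - x) := by
  simp only [laplacian_eq_iteratedFDeriv_stdOrthonormalBasis, iteratedFDeriv_comp_sub]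

theorem laplacian_mul {φ ψ : E → ℝ} (hφ : ContDiff ℝ 2 φ) (hψ : ContDiff ℝ 2 ψ) (w : E) :
    Δ (fun z => φ z * ψ z) w = φ w * Δ ψ w + 2 * fderiv ℝ φ w (∇ ψ w) + ψ w * Δ φ w := by
  have e := stdOrthonormalBasis ℝ E
  simp only [laplacian_eq_sum_fderiv_fderiv e (hφ.mul hψ), laplacian_eq_sum_fderiv_fderiv e hφ,
    laplacian_eq_sum_fderiv_fderiv e hψ, fderiv_fderiv_mul hφ hψ, ← sum_fderiv_mul_fderiv e,
    Finset.sum_add_distrib, Finset.mul_sum]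

end Laplacian

section HeatKernel

open Laplacian InnerProductSpace Gradient

variable {d : ℕ} {t : ℝ}

theorem heatKernel_nonneg (ht : 0 ≤ t) (y : EuclideanSpace ℝ (Fin d)) : 0 ≤ heatKernel d t y := by
  unfold heatKernel
  positivity

theorem heatKernel_neg (y : EuclideanSpace ℝ (Fin d)) :
    heatKernel d t (-y) = heatKernel d t y := by
  simp only [heatKernel, norm_neg]

theorem contDiff_heatKernel {n : ℕ∞} : ContDiff ℝ n (heatKernel d t) := by
  unfold heatKernel
  exact contDiff_const.mul (((contDiff_id.norm_sq ℝ).neg.div_const _).exp)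

@[fun_prop]
theorem continuous_heatKernel : Continuous (heatKernel d t) :=
  contDiff_heatKernel (n := 0).continuous

theorem integral_heatKernel (ht : 0 < t) : ∫ y, heatKernel d t y = 1 := by
  have hexponent (y : EuclideanSpace ℝ (Fin d)) :
      -‖y‖ ^ 2 / (2 * t) = -(1 / (2 * t)) * ‖y‖ ^ 2 := by ring
  have hratio : Real.pi / (1 / (2 * t)) = 2 * Real.pi * t := by field_simp
  simp only [heatKernel, hexponent]
  rw [integral_const_mul, GaussianFourier.integral_rexp_neg_mul_sq_norm (by positivity), hratio,
    finrank_euclideanSpace_fin, ← Real.rpow_add (by positivity), neg_div, neg_add_cancel,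
    Real.rpow_zero]

theorem integrable_heatKernel (ht : 0 < t) : Integrable (heatKernel d t) :=
  .of_integral_ne_zero (by rw [integral_heatKernel ht]; exact one_ne_zero)

theorem integral_inner_mul_heatKernel (v : EuclideanSpace ℝ (Fin d)) :
    ∫ y, ⟪v, y⟫ * heatKernel d t y = 0 := by
  have hodd := integral_neg_eq_self
    (fun y : EuclideanSpace ℝ (Fin d) => ⟪v, y⟫ * heatKernel d t y) volume
  simp only [inner_neg_right, heatKernel_neg, neg_mul, integral_neg] at hodd
  linarith

theorem hasGradientAt_heatKernel (y : EuclideanSpace ℝ (Fin d)) :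
    HasGradientAt (heatKernel d t) (-(heatKernel d t y / t) • y) y := by
  have hnorm : HasFDerivAt (fun z : EuclideanSpace ℝ (Fin d) => -‖z‖ ^ 2 / (2 * t))
      ((2 * t)⁻¹ • -(2 • innerSL ℝ y) : EuclideanSpace ℝ (Fin d) →L[ℝ] ℝ) y := by
    simpa only [div_eq_mul_inv] using
      (hasStrictFDerivAt_norm_sq y).hasFDerivAt.fun_neg.mul_const (2 * t)⁻¹
  rw [hasGradientAt_iff_hasFDerivAt]
  refine (hnorm.exp.const_mul ((2 * Real.pi * t) ^ (-(d : ℝ) / 2))).congr_fderiv ?_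
  ext v
  simp only [heatKernel, smul_apply, neg_apply, innerSL_apply_apply, toDual_apply_apply,
    real_inner_smul_left, smul_eq_mul, nsmul_eq_mul, Nat.cast_ofNat, mul_inv]
  ring

theorem fderiv_heatKernel_apply (y v : EuclideanSpace ℝ (Fin d)) :
    fderiv ℝ (heatKernel d t) y v = -(⟪y, v⟫ / t) * heatKernel d t y := by
  rw [(hasGradientAt_heatKernel y).hasFDerivAt.fderiv, toDual_apply_apply, real_inner_smul_left]
  ring

theorem fderiv_fderiv_heatKernel (y v : EuclideanSpace ℝ (Fin d)) :
    fderiv ℝ (fun z => fderiv ℝ (heatKernel d t) z v) y v =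
      (⟪y, v⟫ ^ 2 / t ^ 2 - ‖v‖ ^ 2 / t) * heatKernel d t y := by
  have hinner : HasFDerivAt (fun z : EuclideanSpace ℝ (Fin d) => -(⟪z, v⟫ / t))
      (-(t⁻¹ • innerSL ℝ v)) y := by
    have := ((innerSL ℝ v).hasFDerivAt (x := y)).const_mul t⁻¹
    simpa only [innerSL_apply_apply, real_inner_comm, div_eq_inv_mul] using this.fun_neg
  have hkernel := (contDiff_heatKernel (d := d) (t := t) (n := 1)).differentiable one_ne_zero y
  simp only [fderiv_heatKernel_apply]
  rw [(hinner.fun_mul hkernel.hasFDerivAt).fderiv]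
  simp only [add_apply, smul_apply, neg_apply, innerSL_apply_apply, smul_eq_mul,
    fderiv_heatKernel_apply, real_inner_self_eq_norm_sq]
  ring

theorem laplacian_heatKernel (y : EuclideanSpace ℝ (Fin d)) :
    Δ (heatKernel d t) y = (‖y‖ ^ 2 / t ^ 2 - d / t) * heatKernel d t y := by
  have e := EuclideanSpace.basisFun (Fin d) ℝ
  rw [laplacian_eq_sum_fderiv_fderiv e (contDiff_heatKernel (n := 2))]
  simp only [fderiv_fderiv_heatKernel, e.norm_eq_one, ← Finset.sum_mul, Finset.sum_sub_distrib,
    ← Finset.sum_div, e.sum_sq_inner_left, Finset.sum_const, Finset.card_univ, Fintype.card_fin]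
  simp [div_eq_mul_inv]

theorem hasDerivAt_heatKernel (y : EuclideanSpace ℝ (Fin d)) (ht : 0 < t) :
    HasDerivAt (fun s => heatKernel d s y) (Δ (heatKernel d t) y / 2) t := by
  have hpow := ((hasDerivAt_id t).const_mul (2 * Real.pi)).rpow_const (p := -(d : ℝ) / 2)
    (Or.inl (by simp only [id]; positivity))
  have hexponent : HasDerivAt (fun s : ℝ => -‖y‖ ^ 2 / (2 * s)) (‖y‖ ^ 2 / (2 * t ^ 2)) t := by
    have hinv := (hasDerivAt_inv ht.ne').const_mul (-‖y‖ ^ 2 / 2)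
    refine (hinv.congr_deriv ?_).congr_of_eventuallyEq
      (.of_forall fun s => div_mul_eq_div_div _ _ _)
    field_simp
  refine (hpow.mul hexponent.exp).congr_deriv ?_
  rw [laplacian_heatKernel, heatKernel, id, Real.rpow_sub_one (by positivity)]
  field_simp
  ring

theorem continuousOn_laplacian_heatKernel :
    ContinuousOn (fun q : ℝ × EuclideanSpace ℝ (Fin d) => Δ (heatKernel d q.1) q.2)
      (Set.Ioi 0 ×ˢ Set.univ) := by
  have hpos : ∀ q ∈ Set.Ioi (0 : ℝ) ×ˢ (Set.univ : Set (EuclideanSpace ℝ (Fin d))), 0 < q.1 :=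
    fun q hq => hq.1
  simp only [laplacian_heatKernel, heatKernel]
  refine .mul (.sub (.div ?_ ?_ ?_) (.div ?_ ?_ ?_))
    (.mul (.rpow_const ?_ ?_) (.rexp (.div ?_ ?_ ?_)))
  all_goals first
    | fun_prop
    | (intro q hq; have := hpos q hq; first | positivity | exact Or.inl (by positivity))

end HeatKernel

section GaussianIntegrability

variable {E : Type*} [NormedAddCommGroup E] {b : ℝ}

theorem integrable_exp_neg_mul_norm_sq [InnerProductSpace ℝ E] [FiniteDimensional ℝ E]
    [MeasurableSpace E] [BorelSpace E] (hb : 0 < b) :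
    Integrable fun y : E => Real.exp (-b * ‖y‖ ^ 2) := by
  refine .of_integral_ne_zero ?_
  rw [GaussianFourier.integral_rexp_neg_mul_sq_norm hb]
  positivity

theorem linear_mul_exp_le (A B : ℝ) {r : ℝ} (hb : 0 < b) (hr : 0 ≤ r) :
    (A * r + B) * Real.exp (-b * r ^ 2) ≤
      (|A| * (1 + 1 / (2 * b)) + |B|) * Real.exp (-(b / 2) * r ^ 2) := by
  have hsq : r ≤ b / 2 * r ^ 2 + 1 / (2 * b) := by
    have : b / 2 * r ^ 2 + 1 / (2 * b) - r = b / 2 * (r - 1 / b) ^ 2 := by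
      field_simp
      ring
    linarith [show 0 ≤ b / 2 * (r - 1 / b) ^ 2 by positivity]
  have hexp : 1 + b / 2 * r ^ 2 ≤ Real.exp (b / 2 * r ^ 2) := by
    linarith [Real.add_one_le_exp (b / 2 * r ^ 2)]
  have hone : 1 ≤ Real.exp (b / 2 * r ^ 2) := Real.one_le_exp (by positivity)
  have hr_le : r ≤ (1 + 1 / (2 * b)) * Real.exp (b / 2 * r ^ 2) := by
    linarith [mul_le_mul_of_nonneg_left hone (show 0 ≤ 1 / (2 * b) by positivity)]
  calc (A * r + B) * Real.exp (-b * r ^ 2)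
      ≤ (|A| * r + |B|) * Real.exp (-b * r ^ 2) := by
        gcongr
        exacts [le_abs_self A, le_abs_self B]
    _ ≤ (|A| * ((1 + 1 / (2 * b)) * Real.exp (b / 2 * r ^ 2)) +
          |B| * Real.exp (b / 2 * r ^ 2)) * Real.exp (-b * r ^ 2) := by
        gcongr
        exact le_mul_of_one_le_right (abs_nonneg B) hone
    _ = (|A| * (1 + 1 / (2 * b)) + |B|) *
          (Real.exp (b / 2 * r ^ 2) * Real.exp (-b * r ^ 2)) := by ring
    _ = (|A| * (1 + 1 / (2 * b)) + |B|) * Real.exp (-(b / 2) * r ^ 2) := by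
        rw [← Real.exp_add]
        ring_nf

theorem integrable_mul_exp_of_linear_growth [InnerProductSpace ℝ E] [FiniteDimensional ℝ E]
    [MeasurableSpace E] [BorelSpace E] {g : E → ℝ} {A B : ℝ} (hg : AEStronglyMeasurable g)
    (hgrowth : ∀ y, |g y| ≤ A * ‖y‖ + B) (hb : 0 < b) :
    Integrable fun y => g y * Real.exp (-b * ‖y‖ ^ 2) := by
  refine ((integrable_exp_neg_mul_norm_sq (half_pos hb)).const_mul
    (|A| * (1 + 1 / (2 * b)) + |B|)).mono' (hg.mul (by fun_prop)) (ae_of_all _ fun y => ?_)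
  rw [norm_mul, Real.norm_eq_abs, Real.norm_of_nonneg (Real.exp_nonneg _)]
  exact (mul_le_mul_of_nonneg_right (hgrowth y) (Real.exp_nonneg _)).trans
    (linear_mul_exp_le A B hb (norm_nonneg y))

variable [MeasurableSpace E] [OpensMeasurableSpace E] {μ : Measure E}
  {g : E → ℝ}

theorem integrable_mul_exp (hg : Integrable g μ) (hb : 0 ≤ b) (x : E) :
    Integrable (fun w => g w * Real.exp (-b * ‖w - x‖ ^ 2)) μ := by
  have hexp : Continuous fun w => Real.exp (-b * ‖w - x‖ ^ 2) := by fun_prop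
  refine hg.mul_bdd (c := 1) hexp.aestronglyMeasurable (ae_of_all _ fun w => ?_)
  rw [Real.norm_of_nonneg (Real.exp_nonneg _), Real.exp_le_one_iff, neg_mul, neg_nonpos]
  positivity

theorem integrable_mul_exp_sub (hb : 0 ≤ b)
    (hg : Integrable (fun w => g w * Real.exp (-b * ‖w‖ ^ 2)) μ) (x : E) :
    Integrable (fun w => g w * Real.exp (-(2 * b) * ‖w - x‖ ^ 2)) μ := by
  have hnorm (w : E) : ‖w‖ ^ 2 ≤ 2 * ‖w - x‖ ^ 2 + 2 * ‖x‖ ^ 2 := by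
    have htri : ‖w‖ ≤ ‖w - x‖ + ‖x‖ := norm_le_norm_sub_add w x
    nlinarith [norm_nonneg w, sq_nonneg (‖w - x‖ - ‖x‖)]
  have hbound (w : E) :
      ‖Real.exp (b * ‖w‖ ^ 2 - 2 * b * ‖w - x‖ ^ 2)‖ ≤ Real.exp (2 * b * ‖x‖ ^ 2) := by
    rw [Real.norm_of_nonneg (Real.exp_nonneg _), Real.exp_le_exp]
    linarith [mul_le_mul_of_nonneg_left (hnorm w) hb]
  refine (hg.mul_bdd (by fun_prop) (ae_of_all _ hbound)).congr (ae_of_all _ fun w => ?_)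
  simp only [mul_assoc, ← Real.exp_add]
  ring_nf

end GaussianIntegrability

section HeatFlow

variable {d : ℕ} {b t : ℝ} {μ : Measure (EuclideanSpace ℝ (Fin d))}
  {g : EuclideanSpace ℝ (Fin d) → ℝ} {x : EuclideanSpace ℝ (Fin d)}

/-- The heat evolution at time `t` of the measure with density `g` with respect to `μ`, evaluated
at the point `x`. -/
noncomputable def heatFlow (μ : Measure (EuclideanSpace ℝ (Fin d)))
    (g : EuclideanSpace ℝ (Fin d) → ℝ) (x : EuclideanSpace ℝ (Fin d)) (t : ℝ) : ℝ :=
  ∫ w, g w * heatKernel d t (w - x) ∂μ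

theorem integrable_mul_heatKernel
    (hg : Integrable (fun w => g w * Real.exp (-b * ‖w - x‖ ^ 2)) μ) (ht : 0 < t)
    (hbt : 2 * b * t ≤ 1) : Integrable (fun w => g w * heatKernel d t (w - x)) μ := by
  have hbound (w : EuclideanSpace ℝ (Fin d)) :
      ‖Real.exp (b * ‖w - x‖ ^ 2 - ‖w - x‖ ^ 2 / (2 * t))‖ ≤ 1 := by
    rw [Real.norm_of_nonneg (Real.exp_nonneg _), Real.exp_le_one_iff, sub_nonpos,
      le_div_iff₀ (by positivity)]
    nlinarith [sq_nonneg ‖w - x‖]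
  refine ((hg.mul_bdd (by fun_prop) (ae_of_all _ hbound)).const_mul
    ((2 * Real.pi * t) ^ (-(d : ℝ) / 2))).congr (ae_of_all _ fun w => ?_)
  have hsplit : -‖w - x‖ ^ 2 / (2 * t) =
      -b * ‖w - x‖ ^ 2 + (b * ‖w - x‖ ^ 2 - ‖w - x‖ ^ 2 / (2 * t)) := by ring
  simp only [heatKernel, hsplit, Real.exp_add]
  ring

theorem heatFlow_add {h : EuclideanSpace ℝ (Fin d) → ℝ}
    (hg : Integrable (fun w => g w * Real.exp (-b * ‖w - x‖ ^ 2)) μ)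
    (hh : Integrable (fun w => h w * Real.exp (-b * ‖w - x‖ ^ 2)) μ) (ht : 0 < t)
    (hbt : 2 * b * t ≤ 1) : heatFlow μ (g + h) x t = heatFlow μ g x t + heatFlow μ h x t := by
  simp only [heatFlow, Pi.add_apply, add_mul]
  exact integral_add (integrable_mul_heatKernel hg ht hbt) (integrable_mul_heatKernel hh ht hbt)

theorem heatFlow_indicator_one {s : Set (EuclideanSpace ℝ (Fin d))} (hs : MeasurableSet s) :
    heatFlow μ (s.indicator 1) x t = ∫ w in s, heatKernel d t (w - x) ∂μ := by
  rw [heatFlow, ← integral_indicator hs]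
  refine integral_congr_ae (ae_of_all _ fun w => ?_)
  by_cases hw : w ∈ s <;> simp [hw]

theorem heatKernel_le_of_le_norm {ε : ℝ} {y : EuclideanSpace ℝ (Fin d)} (hε : 0 ≤ ε)
    (hy : ε ≤ ‖y‖) (ht : 0 < t) (hbt : 4 * b * t ≤ 1) :
    heatKernel d t y ≤ (2 * Real.pi * t) ^ (-(d : ℝ) / 2) * Real.exp (-(ε ^ 2 / 4) / t) *
      Real.exp (-b * ‖y‖ ^ 2) := by
  have hfar : ε ^ 2 / 4 / t ≤ ‖y‖ ^ 2 / 4 / t := by gcongr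
  have hgauss : b * ‖y‖ ^ 2 ≤ ‖y‖ ^ 2 / 4 / t := by
    rw [div_div, le_div_iff₀ (by positivity)]
    nlinarith [sq_nonneg ‖y‖]
  rw [heatKernel, mul_assoc _ (Real.exp _), ← Real.exp_add]
  gcongr
  calc -‖y‖ ^ 2 / (2 * t) = -(‖y‖ ^ 2 / 4 / t) - ‖y‖ ^ 2 / 4 / t := by
        field_simp
        ring
    _ ≤ -(ε ^ 2 / 4) / t + -b * ‖y‖ ^ 2 := by
        rw [neg_div]
        linarith

theorem tendsto_inv_pow_mul_rpow_mul_exp_neg_div {c : ℝ} (hc : 0 < c) (k : ℕ) (s : ℝ) :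
    Tendsto (fun t : ℝ => t⁻¹ ^ k * ((2 * Real.pi * t) ^ (-s) * Real.exp (-c / t)))
      (𝓝[>] 0) (𝓝 0) := by
  have hinv := ((tendsto_rpow_mul_exp_neg_mul_atTop_nhds_zero (k + s) c hc).comp
    tendsto_inv_nhdsGT_zero).const_mul ((2 * Real.pi) ^ (-s))
  rw [mul_zero] at hinv
  refine hinv.congr' ?_
  filter_upwards [self_mem_nhdsWithin] with t (ht : 0 < t)
  have hpow : t⁻¹ ^ ((k : ℝ) + s) = t⁻¹ ^ k * t ^ (-s) := by
    rw [Real.rpow_add (by positivity), Real.rpow_natCast, Real.inv_rpow ht.le,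
      ← Real.rpow_neg ht.le]
  rw [Function.comp_apply, hpow, Real.mul_rpow (by positivity) ht.le, ← div_eq_mul_inv]
  ring

theorem eventually_mul_le_one (c : ℝ) : ∀ᶠ t : ℝ in 𝓝[>] 0, c * t ≤ 1 := by
  have hcont : Tendsto (fun t : ℝ => c * t) (𝓝 0) (𝓝 0) := by
    simpa using (continuous_const_mul c).tendsto 0
  exact nhdsWithin_le_nhds (hcont.eventually_le_const one_pos)

theorem tendsto_inv_pow_mul_heatFlow_of_eventuallyEq_zero
    (hg : Integrable (fun w => g w * Real.exp (-b * ‖w - x‖ ^ 2)) μ) (hzero : g =ᶠ[𝓝 x] 0)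
    (k : ℕ) : Tendsto (fun t => t⁻¹ ^ k * heatFlow μ g x t) (𝓝[>] 0) (𝓝 0) := by
  obtain ⟨ε, hε, hball⟩ := Metric.eventually_nhds_iff.1 hzero
  have hbound := (tendsto_inv_pow_mul_rpow_mul_exp_neg_div (c := ε ^ 2 / 4) (by positivity) k
    (d / 2)).mul_const (∫ w, ‖g w * Real.exp (-b * ‖w - x‖ ^ 2)‖ ∂μ)
  rw [zero_mul] at hbound
  refine squeeze_zero_norm' ?_ hbound
  filter_upwards [self_mem_nhdsWithin, eventually_mul_le_one (4 * b)] with t (ht : 0 < t) hbt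
  rw [norm_mul, mul_assoc, Real.norm_of_nonneg (by positivity), heatFlow, ← neg_div,
    ← integral_const_mul]
  gcongr
  refine norm_integral_le_of_norm_le (hg.norm.const_mul _) (ae_of_all _ fun w => ?_)
  by_cases hw : dist w x < ε
  · simp only [hball hw, Pi.zero_apply, zero_mul, norm_zero, mul_zero, le_refl]
  · have hkernel := heatKernel_le_of_le_norm hε.le (dist_eq_norm w x ▸ not_lt.1 hw) ht hbt
    rw [norm_mul, norm_mul, Real.norm_of_nonneg (heatKernel_nonneg ht.le _),
      Real.norm_of_nonneg (Real.exp_nonneg _), mul_left_comm]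
    gcongr

theorem tendsto_heatFlow_sub_heatFlow_mul_div {χ : EuclideanSpace ℝ (Fin d) → ℝ} {C : ℝ}
    (hg : Integrable (fun w => g w * Real.exp (-b * ‖w - x‖ ^ 2)) μ)
    (hχ : AEStronglyMeasurable χ μ) (hbound : ∀ w, ‖χ w‖ ≤ C) (hone : χ =ᶠ[𝓝 x] 1) :
    Tendsto (fun t => (heatFlow μ g x t - heatFlow μ (fun w => g w * χ w) x t) / t)
      (𝓝[>] 0) (𝓝 0) := by
  have hinner : Integrable (fun w => g w * χ w * Real.exp (-b * ‖w - x‖ ^ 2)) μ := by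
    simpa only [mul_right_comm] using hg.mul_bdd hχ (ae_of_all _ hbound)
  have houter : Integrable
      (fun w => (g w - g w * χ w) * Real.exp (-b * ‖w - x‖ ^ 2)) μ := by
    simp only [sub_mul]
    exact hg.sub hinner
  have hzero : (fun w => g w - g w * χ w) =ᶠ[𝓝 x] 0 := by
    filter_upwards [hone] with w hw
    rw [hw, Pi.one_apply, mul_one, sub_self, Pi.zero_apply]
  refine (tendsto_inv_pow_mul_heatFlow_of_eventuallyEq_zero houter hzero 1).congr' ?_
  filter_upwards [self_mem_nhdsWithin, eventually_mul_le_one (2 * b)] with t ht hbt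
  have hsum := heatFlow_add hinner houter ht hbt
  rw [pow_one, eq_div_iff (ne_of_gt ht), mul_comm t⁻¹, inv_mul_cancel_right₀ (ne_of_gt ht),
    eq_sub_iff_add_eq', ← hsum]
  congr 1
  exact funext fun w => add_sub_cancel _ _

theorem heatKernel_eq_inv_sqrt_smul (ht : 0 < t) (y : EuclideanSpace ℝ (Fin d)) :
    heatKernel d t y = (√t)⁻¹ ^ d * heatKernel d 1 ((√t)⁻¹ • y) := by
  have hpow : (√t)⁻¹ ^ d = t ^ (-(d : ℝ) / 2) := by
    rw [Real.sqrt_eq_rpow, ← Real.rpow_neg ht.le, ← Real.rpow_natCast, ← Real.rpow_mul ht.le]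
    ring_nf
  have hnorm : ‖(√t)⁻¹ • y‖ ^ 2 = ‖y‖ ^ 2 / t := by
    rw [norm_smul, norm_inv, Real.norm_of_nonneg (Real.sqrt_nonneg t), mul_pow, inv_pow,
      Real.sq_sqrt ht.le, inv_mul_eq_div]
  rw [heatKernel, heatKernel, hpow, hnorm, Real.mul_rpow (by positivity) ht.le, mul_one, mul_one]
  ring_nf

theorem tendsto_norm_pow_mul_heatKernel_cobounded (k : ℕ) :
    Tendsto (fun y => ‖y‖ ^ k * heatKernel d 1 y) (Bornology.cobounded _) (𝓝 0) := by
  have hradial := ((tendsto_rpow_mul_exp_neg_mul_atTop_nhds_zero (k / 2) (1 / 2)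
    one_half_pos).comp ((tendsto_pow_atTop two_ne_zero).comp
      (tendsto_norm_cobounded_atTop (E := EuclideanSpace ℝ (Fin d))))).const_mul
        ((2 * Real.pi * 1) ^ (-(d : ℝ) / 2))
  rw [mul_zero] at hradial
  refine hradial.congr fun y => ?_
  have hpow : (‖y‖ ^ 2) ^ ((k : ℝ) / 2) = ‖y‖ ^ k := by
    rw [← Real.rpow_natCast, ← Real.rpow_mul (norm_nonneg y), ← Real.rpow_natCast]
    push_cast
    ring_nf
  simp only [Function.comp_apply, hpow, heatKernel]
  ring_nf

theorem tendsto_heatFlow_volume (hg : Integrable g) (hx : ContinuousAt g x) :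
    Tendsto (heatFlow volume g x) (𝓝[>] 0) (𝓝 (g x)) := by
  have hscale : Tendsto (fun t : ℝ => (√t)⁻¹) (𝓝[>] 0) atTop := by
    refine tendsto_inv_nhdsGT_zero.comp (tendsto_nhdsWithin_iff.2 ⟨?_, ?_⟩)
    · simpa using (Real.continuous_sqrt.tendsto 0).mono_left nhdsWithin_le_nhds
    · filter_upwards [self_mem_nhdsWithin] with t ht using Real.sqrt_pos.2 ht
  have hpeak := (tendsto_integral_comp_smul_smul_of_integrable' (μ := volume)
    (fun y => heatKernel_nonneg zero_le_one y) (integral_heatKernel (d := d) one_pos)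
    (tendsto_norm_pow_mul_heatKernel_cobounded _) hg hx).comp hscale
  refine hpeak.congr' ?_
  filter_upwards [self_mem_nhdsWithin] with t ht
  refine integral_congr_ae (ae_of_all _ fun w => ?_)
  simp only [finrank_euclideanSpace_fin]
  rw [← heatKernel_eq_inv_sqrt_smul ht, ← heatKernel_neg, neg_sub, smul_eq_mul, mul_comm]

end HeatFlow

section RadialIntegral

theorem setIntegral_Ioc_indicator_Ici_deriv {k k' : ℝ → ℝ} {a R : ℝ} (ha : 0 ≤ a) (haR : a ≤ R)
    (hk : ∀ r ∈ Set.Icc 0 R, HasDerivAt k (k' r) r) (hk' : ContinuousOn k' (Set.Icc 0 R)) :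
    ∫ r in Set.Ioc 0 R, (Set.Ici a).indicator k' r = k R - k a := by
  have hsub : Set.uIcc a R ⊆ Set.Icc 0 R := by
    rw [Set.uIcc_of_le haR]
    exact Set.Icc_subset_Icc_left ha
  have hae : (Set.Ioc 0 R ∩ Set.Ici a : Set ℝ) =ᵐ[volume] Set.Ioc a R := by
    have hIoi := (ae_eq_refl (Set.Ioc 0 R)).inter (Ioi_ae_eq_Ici (μ := volume) (a := a)).symm
    rwa [Set.Ioc_inter_Ioi, sup_of_le_right ha] at hIoi
  rw [setIntegral_indicator measurableSet_Ici, setIntegral_congr_set hae,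
    ← intervalIntegral.integral_of_le haR]
  exact intervalIntegral.integral_eq_sub_of_hasDerivAt (fun r hr => hk r (hsub hr))
    (hk'.mono hsub).intervalIntegrable

theorem setIntegral_closedBall_comp_dist {X : Type*} [PseudoMetricSpace X] [MeasurableSpace X]
    [OpensMeasurableSpace X] {μ : Measure X} {x : X} {k k' : ℝ → ℝ} {R : ℝ}
    (hμ : μ (closedBall x R) ≠ ∞) (hk : ∀ r ∈ Set.Icc 0 R, HasDerivAt k (k' r) r)
    (hk' : ContinuousOn k' (Set.Icc 0 R)) :
    ∫ w in closedBall x R, k (dist w x) ∂μ =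
      k R * μ.real (closedBall x R) - ∫ r in Set.Ioc 0 R, k' r * μ.real (closedBall x r) := by
  have : IsFiniteMeasure (μ.restrict (closedBall x R)) := isFiniteMeasure_restrict.2 hμ
  have hdist : Measurable fun w : X => dist w x := (continuous_id.dist continuous_const).measurable
  have hball (r : ℝ) : MeasurableSet (closedBall x r) := isClosed_closedBall.measurableSet
  -- Fubini applied to `k (dist w x) = k R - ∫ r in dist w x..R, k' r`.
  have hint : Integrable (Function.uncurry fun w r => (Set.Ici (dist w x)).indicator k' r)
      ((μ.restrict (closedBall x R)).prod (volume.restrict (Set.Ioc 0 R))) :=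
    ((hk'.integrableOn_Icc.mono_set Set.Ioc_subset_Icc_self).comp_snd _).indicator
      (measurableSet_le (hdist.comp measurable_fst) measurable_snd)
  have hinner : ∀ r ∈ Set.Ioc 0 R, ∫ w in closedBall x R, (Set.Ici (dist w x)).indicator k' r ∂μ =
      k' r * μ.real (closedBall x r) := by
    intro r hr
    have hswap : (fun w => (Set.Ici (dist w x)).indicator k' r) =
        (closedBall x r).indicator fun _ => k' r := rfl
    rw [hswap, setIntegral_indicator (hball r), setIntegral_const,
      Set.inter_eq_self_of_subset_right (closedBall_subset_closedBall hr.2), smul_eq_mul, mul_comm]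
  calc ∫ w in closedBall x R, k (dist w x) ∂μ
      = ∫ w in closedBall x R,
          (k R - ∫ r in Set.Ioc 0 R, (Set.Ici (dist w x)).indicator k' r) ∂μ := by
        refine setIntegral_congr_fun (hball R) fun w hw => ?_
        simp only [setIntegral_Ioc_indicator_Ici_deriv dist_nonneg hw hk hk', sub_sub_cancel]
    _ = k R * μ.real (closedBall x R) - ∫ w in closedBall x R,
          (∫ r in Set.Ioc 0 R, (Set.Ici (dist w x)).indicator k' r) ∂μ := by
        have hinner_int : IntegrableOn
            (fun w => ∫ r in Set.Ioc 0 R, (Set.Ici (dist w x)).indicator k' r)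
            (closedBall x R) μ := hint.integral_prod_left
        rw [integral_sub (integrable_const _) hinner_int, setIntegral_const, smul_eq_mul, mul_comm]
    _ = k R * μ.real (closedBall x R) - ∫ r in Set.Ioc 0 R, k' r * μ.real (closedBall x r) := by
        rw [integral_integral_swap hint, setIntegral_congr_fun measurableSet_Ioc hinner]

variable {X : Type*} [PseudoMetricSpace X] [ProperSpace X] [MeasurableSpace X]

theorem measurable_measureReal_closedBall (μ : Measure X) [IsFiniteMeasureOnCompacts μ] (x : X) :
    Measurable fun r => μ.real (closedBall x r) :=
  Monotone.measurable fun _ _ hrs =>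
    measureReal_mono (closedBall_subset_closedBall hrs) measure_closedBall_lt_top.ne

theorem integrable_indicator_one_closedBall [OpensMeasurableSpace X] (μ : Measure X)
    [IsFiniteMeasureOnCompacts μ] (x : X) (R : ℝ) :
    Integrable ((closedBall x R).indicator (1 : X → ℝ)) μ :=
  (integrable_indicator_iff isClosed_closedBall.measurableSet).2
    (integrableOn_const (C := (1 : ℝ)) measure_closedBall_lt_top.ne)

end RadialIntegral

section Differentiation

variable {d : ℕ} {t R D : ℝ} {x : EuclideanSpace ℝ (Fin d)}
  {μ : Measure (EuclideanSpace ℝ (Fin d))}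

/-- The radial profile of the heat kernel: `heatKernel d t y = heatProfile d t ‖y‖`. -/
noncomputable def heatProfile (d : ℕ) (t r : ℝ) : ℝ :=
  (2 * Real.pi * t) ^ (-(d : ℝ) / 2) * Real.exp (-r ^ 2 / (2 * t))

theorem hasDerivAt_heatProfile (d : ℕ) (t r : ℝ) :
    HasDerivAt (heatProfile d t) (-(r / t * heatProfile d t r)) r := by
  have hexponent : HasDerivAt (fun s : ℝ => -s ^ 2 / (2 * t)) (-(2 * r) / (2 * t)) r := by
    simpa using (hasDerivAt_pow 2 r).fun_neg.div_const (2 * t)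
  refine (hexponent.exp.const_mul ((2 * Real.pi * t) ^ (-(d : ℝ) / 2))).congr_deriv ?_
  rw [heatProfile, ← mul_neg, mul_div_mul_left _ t two_ne_zero]
  ring

theorem continuous_heatProfile (d : ℕ) (t : ℝ) : Continuous (heatProfile d t) :=
  continuous_iff_continuousAt.2 fun r => (hasDerivAt_heatProfile d t r).continuousAt

theorem heatProfile_nonneg (ht : 0 ≤ t) (r : ℝ) : 0 ≤ heatProfile d t r := by
  unfold heatProfile
  positivity

theorem heatProfile_anti {r s : ℝ} (ht : 0 ≤ t) (hr : 0 ≤ r) (hrs : r ≤ s) :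
    heatProfile d t s ≤ heatProfile d t r := by
  unfold heatProfile
  gcongr

theorem tendsto_inv_pow_mul_heatProfile (d k : ℕ) (hR : 0 < R) :
    Tendsto (fun t => t⁻¹ ^ k * heatProfile d t R) (𝓝[>] 0) (𝓝 0) := by
  refine (tendsto_inv_pow_mul_rpow_mul_exp_neg_div (c := R ^ 2 / 2) (by positivity) k
    (d / 2)).congr fun t => ?_
  rw [heatProfile, neg_div, neg_div, neg_div, div_div]

theorem setIntegral_closedBall_heatKernel (hμ : μ (closedBall x R) ≠ ∞) :
    ∫ w in closedBall x R, heatKernel d t (w - x) ∂μ =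
      heatProfile d t R * μ.real (closedBall x R) +
        ∫ r in Set.Ioc 0 R, r / t * heatProfile d t r * μ.real (closedBall x r) := by
  have hcont : Continuous fun r => -(r / t * heatProfile d t r) :=
    ((continuous_id.div_const t).mul (continuous_heatProfile d t)).neg
  have hradial := setIntegral_closedBall_comp_dist hμ
    (fun r _ => hasDerivAt_heatProfile d t r) hcont.continuousOn
  simp only [dist_eq_norm, neg_mul, integral_neg, sub_neg_eq_add] at hradial
  exact hradial

theorem tendsto_setIntegral_closedBall_volume_heatKernel (hR : 0 < R)
    (x : EuclideanSpace ℝ (Fin d)) :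
    Tendsto (fun t => ∫ w in closedBall x R, heatKernel d t (w - x)) (𝓝[>] 0) (𝓝 1) := by
  have hball : MeasurableSet (closedBall x R) := isClosed_closedBall.measurableSet
  have hone : (closedBall x R).indicator (1 : EuclideanSpace ℝ (Fin d) → ℝ) =ᶠ[𝓝 x] 1 := by
    filter_upwards [closedBall_mem_nhds x hR] with w hw using Set.indicator_of_mem hw _
  have hflow := tendsto_heatFlow_volume (integrable_indicator_one_closedBall volume x R)
    (continuousAt_const.congr hone.symm)
  rw [hone.eq_of_nhds] at hflow
  refine hflow.congr fun t => ?_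
  rw [heatFlow_indicator_one hball]

-- The radial formula for `μ = volume` yields the total mass of the weight without computing it.
theorem tendsto_setIntegral_radial_peak (hR : 0 < R) (x : EuclideanSpace ℝ (Fin d)) :
    Tendsto (fun t => ∫ r in Set.Ioc 0 R, r / t * heatProfile d t r * volume.real (closedBall x r))
      (𝓝[>] 0) (𝓝 1) := by
  have hboundary := (tendsto_inv_pow_mul_heatProfile d 0 hR).mul_const
    (volume.real (closedBall x R))
  have hdiff := (tendsto_setIntegral_closedBall_volume_heatKernel hR x).sub hboundary
  simp only [pow_zero, one_mul, zero_mul, sub_zero] at hdiff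
  refine hdiff.congr fun t => ?_
  rw [setIntegral_closedBall_heatKernel measure_closedBall_lt_top.ne, add_sub_cancel_left]

theorem tendstoUniformlyOn_radial_peak {ε : ℝ} (hε : 0 < ε) (x : EuclideanSpace ℝ (Fin d)) :
    TendstoUniformlyOn (fun t r => r / t * heatProfile d t r * volume.real (closedBall x r)) 0
      (𝓝[>] 0) (Set.Icc ε R) := by
  have hbound := (tendsto_inv_pow_mul_heatProfile d 1 hε).mul_const
    (R * volume.real (closedBall x R))
  rw [zero_mul] at hbound
  rw [Metric.tendstoUniformlyOn_iff]
  intro η hη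
  filter_upwards [hbound.eventually_lt_const hη, self_mem_nhdsWithin] with t hlt (ht : 0 < t) r hr
  have hr₀ : 0 ≤ r := hε.le.trans hr.1
  have hprofile := heatProfile_nonneg (d := d) ht.le r
  rw [Pi.zero_apply, dist_zero_left, Real.norm_of_nonneg (by positivity)]
  refine lt_of_le_of_lt ?_ hlt
  calc r / t * heatProfile d t r * volume.real (closedBall x r)
      ≤ R / t * heatProfile d t ε * volume.real (closedBall x R) := by
        have hvol := measureReal_mono (closedBall_subset_closedBall (x := x) hr.2)
          (measure_closedBall_lt_top (μ := volume)).ne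
        have hR : 0 ≤ R := hr₀.trans hr.2
        have hanti := heatProfile_anti (d := d) ht.le hε.le hr.1
        have := hprofile.trans hanti
        gcongr
        exact hr.2
    _ = t⁻¹ ^ 1 * heatProfile d t ε * (R * volume.real (closedBall x R)) := by ring

theorem exists_integrableOn_measure_closedBall_ratio [IsLocallyFiniteMeasure μ]
    (hD : Tendsto (fun r => μ.real (closedBall x r) / volume.real (closedBall x r))
      (𝓝[>] 0) (𝓝 D)) :
    ∃ R > 0, IntegrableOn (fun r => μ.real (closedBall x r) / volume.real (closedBall x r))
      (Set.Ioc 0 R) := by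
  have hmeas := (measurable_measureReal_closedBall μ x).div
    (measurable_measureReal_closedBall volume x)
  have hfinite : volume.FiniteAtFilter (𝓝[>] (0 : ℝ)) := Measure.finiteAt_nhdsWithin _ _ _
  obtain ⟨s, hs, hint⟩ := hfinite.integrableAtFilter_of_tendsto
    hmeas.stronglyMeasurable.stronglyMeasurableAtFilter hD
  obtain ⟨R, hR, hsub⟩ := (mem_nhdsGT_iff_exists_Ioc_subset).1 hs
  exact ⟨R, hR, hint.mono_set hsub⟩

theorem tendsto_setIntegral_radial_peak_mul {g : ℝ → ℝ} (hR : 0 < R)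
    (hg : IntegrableOn g (Set.Ioc 0 R)) (hD : Tendsto g (𝓝[>] 0) (𝓝 D))
    (x : EuclideanSpace ℝ (Fin d)) :
    Tendsto (fun t => ∫ r in Set.Ioc 0 R,
      r / t * heatProfile d t r * volume.real (closedBall x r) * g r) (𝓝[>] 0) (𝓝 D) := by
  refine tendsto_setIntegral_peak_smul_of_integrableOn_of_tendsto (x₀ := 0) measurableSet_Ioc
    measurableSet_Ioc le_rfl self_mem_nhdsWithin (by simp) ?_ ?_
    (tendsto_setIntegral_radial_peak hR x) ?_ hg
    (hD.mono_left (nhdsWithin_mono _ Set.Ioc_subset_Ioi_self))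
  · filter_upwards [self_mem_nhdsWithin] with t (ht : 0 < t) r hr
    have := heatProfile_nonneg (d := d) ht.le r
    have := hr.1
    positivity
  · intro u hu hzero
    obtain ⟨ε, hε, hball⟩ := Metric.isOpen_iff.1 hu 0 hzero
    refine (tendstoUniformlyOn_radial_peak hε x).mono fun r hr => ⟨?_, hr.1.2⟩
    by_contra! hlt
    exact hr.2 (hball (by rwa [mem_ball_zero_iff, Real.norm_of_nonneg hr.1.1.le]))
  · refine .of_forall fun t => Measurable.aestronglyMeasurable ?_
    exact ((measurable_id.div_const t).mul (continuous_heatProfile d t).measurable).mul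
      (measurable_measureReal_closedBall volume x)

theorem exists_tendsto_setIntegral_closedBall_heatKernel [IsLocallyFiniteMeasure μ]
    (hD : Tendsto (fun r => μ.real (closedBall x r) / volume.real (closedBall x r))
      (𝓝[>] 0) (𝓝 D)) :
    ∃ R > 0, Tendsto (fun t => ∫ w in closedBall x R, heatKernel d t (w - x) ∂μ)
      (𝓝[>] 0) (𝓝 D) := by
  obtain ⟨R, hR, hint⟩ := exists_integrableOn_measure_closedBall_ratio hD
  have hboundary := (tendsto_inv_pow_mul_heatProfile d 0 hR).mul_const (μ.real (closedBall x R))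
  have hsum := hboundary.add (tendsto_setIntegral_radial_peak_mul hR hint hD x)
  simp only [pow_zero, one_mul, zero_mul, zero_add] at hsum
  refine ⟨R, hR, hsum.congr fun t => ?_⟩
  rw [setIntegral_closedBall_heatKernel measure_closedBall_lt_top.ne]
  congr 1
  refine setIntegral_congr_fun measurableSet_Ioc fun r hr => ?_
  have hvol : volume.real (closedBall x r) ≠ 0 :=
    (ENNReal.toReal_pos (measure_closedBall_pos _ _ hr.1).ne' measure_closedBall_lt_top.ne).ne'
  rw [mul_assoc _ (volume.real _), mul_div_cancel₀ _ hvol]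

theorem tendsto_heatFlow_of_tendsto_measure_closedBall_ratio [IsLocallyFiniteMeasure μ]
    (hD : Tendsto (fun r => μ.real (closedBall x r) / volume.real (closedBall x r))
      (𝓝[>] 0) (𝓝 D)) {χ : EuclideanSpace ℝ (Fin d) → ℝ} (hχ : Integrable χ μ)
    (hone : χ =ᶠ[𝓝 x] 1) : Tendsto (heatFlow μ χ x) (𝓝[>] 0) (𝓝 D) := by
  obtain ⟨R, hR, hlim⟩ := exists_tendsto_setIntegral_closedBall_heatKernel hD
  have hball : MeasurableSet (closedBall x R) := isClosed_closedBall.measurableSet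
  have hind := integrable_indicator_one_closedBall μ x R
  have hzero : χ - (closedBall x R).indicator 1 =ᶠ[𝓝 x] 0 := by
    filter_upwards [hone, closedBall_mem_nhds x hR] with w hχw hw
    simp [hχw, hw]
  have htail := tendsto_inv_pow_mul_heatFlow_of_eventuallyEq_zero
    (integrable_mul_exp (hχ.sub hind) le_rfl x) hzero 0
  refine (by simpa using hlim.add htail : Tendsto _ _ (𝓝 D)).congr' ?_
  filter_upwards [self_mem_nhdsWithin] with t ht
  rw [← heatFlow_indicator_one hball, ← heatFlow_add (integrable_mul_exp hind le_rfl x)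
    (integrable_mul_exp (hχ.sub hind) le_rfl x) ht (by simp), add_sub_cancel]

theorem ae_tendsto_measure_closedBall_ratio (μ : Measure (EuclideanSpace ℝ (Fin d)))
    [IsLocallyFiniteMeasure μ] :
    ∀ᵐ x, Tendsto (fun r => μ.real (closedBall x r) / volume.real (closedBall x r)) (𝓝[>] 0)
      (𝓝 (μ.rnDeriv volume x).toReal) := by
  filter_upwards [Besicovitch.ae_tendsto_rnDeriv μ volume, Measure.rnDeriv_ne_top μ volume]
    with x hx hfin
  simpa only [Function.comp_def, ENNReal.toReal_div, Measure.real] using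
    (ENNReal.tendsto_toReal hfin).comp hx

end Differentiation

section TimeDerivative

open Laplacian

variable {d : ℕ} {t : ℝ} {x : EuclideanSpace ℝ (Fin d)} {g : EuclideanSpace ℝ (Fin d) → ℝ}
  {μ : Measure (EuclideanSpace ℝ (Fin d))}

theorem exists_norm_mul_laplacian_heatKernel_le (hg : Continuous g) (hsupp : HasCompactSupport g)
    (x : EuclideanSpace ℝ (Fin d)) (ht : 0 < t) :
    ∃ C, ∀ w, ∀ s ∈ Set.Icc (t / 2) (2 * t),
      ‖g w * (Δ (heatKernel d s) (w - x) / 2)‖ ≤ (tsupport g).indicator (fun _ => C) w := by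
  have hcont : ContinuousOn (fun q : ℝ × EuclideanSpace ℝ (Fin d) =>
      g q.2 * (Δ (heatKernel d q.1) (q.2 - x) / 2)) (Set.Icc (t / 2) (2 * t) ×ˢ tsupport g) := by
    refine (hg.comp continuous_snd).continuousOn.mul (ContinuousOn.div_const ?_ 2)
    exact continuousOn_laplacian_heatKernel.comp
      (f := fun q : ℝ × EuclideanSpace ℝ (Fin d) => (q.1, q.2 - x)) (by fun_prop)
      fun q hq => ⟨(half_pos ht).trans_le hq.1.1, Set.mem_univ _⟩
  obtain ⟨C, hC⟩ := (isCompact_Icc.prod hsupp.isCompact).exists_bound_of_continuousOn hcont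
  refine ⟨C, fun w s hs => ?_⟩
  by_cases hw : w ∈ tsupport g
  · rw [Set.indicator_of_mem hw]
    exact hC (s, w) ⟨hs, hw⟩
  · rw [Set.indicator_of_notMem hw, image_eq_zero_of_notMem_tsupport hw, zero_mul, norm_zero]

theorem hasDerivAt_heatFlow [IsFiniteMeasureOnCompacts μ] (hg : Continuous g)
    (hsupp : HasCompactSupport g) (ht : 0 < t) :
    HasDerivAt (heatFlow μ g x) (∫ w, g w * (Δ (heatKernel d t) (w - x) / 2) ∂μ) t := by
  obtain ⟨C, hC⟩ := exists_norm_mul_laplacian_heatKernel_le hg hsupp x ht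
  have hkernel (s : ℝ) : Continuous fun w => g w * heatKernel d s (w - x) := by fun_prop
  have hlaplacian : Continuous fun w => g w * (Δ (heatKernel d t) (w - x) / 2) :=
    hg.mul (((continuous_laplacian (contDiff_heatKernel (n := 2))).comp
      (continuous_sub_right x)).div_const 2)
  have hnhds : Set.Icc (t / 2) (2 * t) ∈ 𝓝 t := Icc_mem_nhds (by linarith) (by linarith)
  refine (hasDerivAt_integral_of_dominated_loc_of_deriv_le
    (F' := fun s w => g w * (Δ (heatKernel d s) (w - x) / 2)) hnhds
    (.of_forall fun s => (hkernel s).aestronglyMeasurable)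
    ((hkernel t).integrable_of_hasCompactSupport hsupp.mul_right)
    hlaplacian.aestronglyMeasurable (ae_of_all _ hC) ?_ ?_).2
  · exact (integrable_indicator_iff (isClosed_tsupport g).measurableSet).2
      (integrableOn_const hsupp.isCompact.measure_lt_top.ne)
  · exact ae_of_all _ fun w s hs =>
      (hasDerivAt_heatKernel (w - x) ((half_pos ht).trans_le hs.1)).const_mul (g w)

end TimeDerivative

section SecondDerivMeasures

open Laplacian InnerProductSpace Gradient

variable {d : ℕ} {b t : ℝ} {x : EuclideanSpace ℝ (Fin d)} {f χ : EuclideanSpace ℝ (Fin d) → ℝ}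
  {μp μn : Fin d → Fin d → Measure (EuclideanSpace ℝ (Fin d))}

theorem laplacian_eq_sum_secondPartial {ψ : EuclideanSpace ℝ (Fin d) → ℝ} (hψ : ContDiff ℝ 2 ψ)
    (w : EuclideanSpace ℝ (Fin d)) : Δ ψ w = ∑ i, secondPartial d ψ i i w := by
  simp only [laplacian_eq_sum_fderiv_fderiv (EuclideanSpace.basisFun (Fin d) ℝ) hψ,
    EuclideanSpace.basisFun_apply, secondPartial]

theorem integrable_mul_secondPartial {ψ : EuclideanSpace ℝ (Fin d) → ℝ} (hf : Continuous f)
    (hψ : ContDiff ℝ 2 ψ) (hsupp : HasCompactSupport ψ) (i j : Fin d) :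
    Integrable fun w => f w * secondPartial d ψ i j w := by
  have hfirst : ContDiff ℝ 1 fun z => fderiv ℝ ψ z (EuclideanSpace.single j 1) :=
    (hψ.fderiv_right (by norm_num)).clm_apply contDiff_const
  refine (hf.mul ?_).integrable_of_hasCompactSupport (HasCompactSupport.mul_left ?_)
  · exact (hfirst.continuous_fderiv one_ne_zero).clm_apply continuous_const
  · exact (hsupp.fderiv_apply ℝ _).fderiv_apply ℝ _

theorem IsSecondDerivMeasures.integral_mul_laplacian (hμ : IsSecondDerivMeasures d f μp μn)
    (hf : Continuous f) {ψ : EuclideanSpace ℝ (Fin d) → ℝ} (hψ : ContDiff ℝ (⊤ : ℕ∞) ψ)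
    (hsupp : HasCompactSupport ψ) :
    ∫ w, f w * Δ ψ w = ∑ i, ((∫ w, ψ w ∂μp i i) - ∫ w, ψ w ∂μn i i) := by
  have hψ₂ : ContDiff ℝ 2 ψ := contDiff_infty.1 hψ 2
  simp only [hμ.2.2 _ _ ψ hψ hsupp, laplacian_eq_sum_secondPartial hψ₂, Finset.mul_sum]
  exact integral_finsetSum _ fun i _ => integrable_mul_secondPartial hf hψ₂ hsupp i i

theorem mul_laplacian_heatKernel (hχ : ContDiff ℝ 2 χ) (x w : EuclideanSpace ℝ (Fin d)) :
    χ w * Δ (heatKernel d t) (w - x) = Δ (fun z => χ z * heatKernel d t (z - x)) w +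
      2 * (t⁻¹ * (fderiv ℝ χ w (w - x) * heatKernel d t (w - x))) -
        Δ χ w * heatKernel d t (w - x) := by
  have hkernel : ContDiff ℝ 2 fun z => heatKernel d t (z - x) :=
    (contDiff_heatKernel (n := 2)).comp (contDiff_id.sub contDiff_const)
  have hgradient : ∇ (fun z => heatKernel d t (z - x)) w =
      -(heatKernel d t (w - x) / t) • (w - x) := by
    refine HasGradientAt.gradient ?_
    rw [hasGradientAt_iff_hasFDerivAt]
    exact (hasFDerivAt_comp_sub x).2 (hasGradientAt_heatKernel (w - x)).hasFDerivAt
  rw [laplacian_mul hχ hkernel, laplacian_comp_sub, hgradient, map_smul, smul_eq_mul]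
  ring

theorem integrable_mul_laplacian (hf : Continuous f) (hχ : ContDiff ℝ 2 χ)
    (hsupp : HasCompactSupport χ) : Integrable fun w => f w * Δ χ w :=
  (hf.mul (continuous_laplacian hχ)).integrable_of_hasCompactSupport
    (hasCompactSupport_laplacian hsupp).mul_left

theorem integrable_mul_fderiv_sub (hf : Continuous f) (hχ : ContDiff ℝ 1 χ)
    (hsupp : HasCompactSupport χ) (x : EuclideanSpace ℝ (Fin d)) :
    Integrable fun w => f w * fderiv ℝ χ w (w - x) := by
  have hcont : Continuous fun w => fderiv ℝ χ w (w - x) :=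
    (hχ.continuous_fderiv one_ne_zero).clm_apply (continuous_sub_right x)
  have hcompact : HasCompactSupport fun w => fderiv ℝ χ w (w - x) :=
    (hsupp.fderiv ℝ).mono fun w hw hzero => hw (by simp only [hzero, zero_apply])
  exact (hf.mul hcont).integrable_of_hasCompactSupport hcompact.mul_left

theorem IsSecondDerivMeasures.integral_mul_laplacian_heatKernel
    (hμ : IsSecondDerivMeasures d f μp μn) (hf : Continuous f) (hχ : ContDiff ℝ (⊤ : ℕ∞) χ)
    (hsupp : HasCompactSupport χ) (x : EuclideanSpace ℝ (Fin d)) (ht : 0 < t) :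
    ∫ w, f w * χ w * (Δ (heatKernel d t) (w - x) / 2) =
      1 / 2 * ∑ i, (heatFlow (μp i i) χ x t - heatFlow (μn i i) χ x t) +
        t⁻¹ * heatFlow volume (fun w => f w * fderiv ℝ χ w (w - x)) x t -
          1 / 2 * heatFlow volume (fun w => f w * Δ χ w) x t := by
  have hψ : ContDiff ℝ (⊤ : ℕ∞) fun z => χ z * heatKernel d t (z - x) :=
    hχ.mul (contDiff_heatKernel.comp (contDiff_id.sub contDiff_const))
  have hψsupp : HasCompactSupport fun z => χ z * heatKernel d t (z - x) := hsupp.mul_right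
  have hmain := (integrable_mul_laplacian hf (contDiff_infty.1 hψ 2) hψsupp).const_mul (1 / 2)
  have hgradient := (integrable_mul_heatKernel (integrable_mul_exp (integrable_mul_fderiv_sub hf
    (contDiff_infty.1 hχ 1) hsupp x) le_rfl x) ht (by simp)).const_mul t⁻¹
  have hlaplacian := (integrable_mul_heatKernel (integrable_mul_exp (integrable_mul_laplacian hf
    (contDiff_infty.1 hχ 2) hsupp) le_rfl x) ht (by simp)).const_mul (1 / 2)
  have hsplit (w : EuclideanSpace ℝ (Fin d)) : f w * χ w * (Δ (heatKernel d t) (w - x) / 2) =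
      1 / 2 * (f w * Δ (fun z => χ z * heatKernel d t (z - x)) w) +
        t⁻¹ * (f w * fderiv ℝ χ w (w - x) * heatKernel d t (w - x)) -
          1 / 2 * (f w * Δ χ w * heatKernel d t (w - x)) := by
    linear_combination f w / 2 * mul_laplacian_heatKernel (t := t) (contDiff_infty.1 hχ 2) x w
  simp only [hsplit]
  rw [integral_sub (hmain.fun_add hgradient) hlaplacian, integral_add hmain hgradient,
    integral_const_mul, integral_const_mul, integral_const_mul,
    hμ.integral_mul_laplacian hf hψ hψsupp]
  rfl

theorem IsSecondDerivMeasures.tendsto_integral_mul_laplacian_heatKernel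
    (hμ : IsSecondDerivMeasures d f μp μn) (hf : Continuous f) (hχ : ContDiff ℝ (⊤ : ℕ∞) χ)
    (hsupp : HasCompactSupport χ) (hone : χ =ᶠ[𝓝 x] 1) {Dp Dn : Fin d → ℝ}
    (hp : ∀ i, Tendsto (heatFlow (μp i i) χ x) (𝓝[>] 0) (𝓝 (Dp i)))
    (hn : ∀ i, Tendsto (heatFlow (μn i i) χ x) (𝓝[>] 0) (𝓝 (Dn i))) :
    Tendsto (fun t => ∫ w, f w * χ w * (Δ (heatKernel d t) (w - x) / 2)) (𝓝[>] 0)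
      (𝓝 (1 / 2 * ∑ i, (Dp i - Dn i))) := by
  have hgradient := tendsto_inv_pow_mul_heatFlow_of_eventuallyEq_zero
    (integrable_mul_exp (integrable_mul_fderiv_sub hf (contDiff_infty.1 hχ 1) hsupp x) le_rfl x)
    (by
      filter_upwards [hone.fderiv (𝕜 := ℝ)] with w hw
      simp [hw, Pi.one_def]) 1
  have hlaplacian := tendsto_inv_pow_mul_heatFlow_of_eventuallyEq_zero
    (integrable_mul_exp (integrable_mul_laplacian hf (contDiff_infty.1 hχ 2) hsupp) le_rfl x)
    (by
      filter_upwards [laplacian_congr_nhds hone] with w hw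
      simp [hw, Pi.one_def]) 0
  have hmain := (tendsto_finsetSum Finset.univ fun i _ => (hp i).sub (hn i)).const_mul (1 / 2)
  have hlim := (hmain.add hgradient).sub (hlaplacian.const_mul (1 / 2))
  simp only [pow_one, pow_zero, one_mul, mul_zero, add_zero, sub_zero] at hlim
  refine hlim.congr' ?_
  filter_upwards [self_mem_nhdsWithin] with t ht
  rw [hμ.integral_mul_laplacian_heatKernel hf hχ hsupp x ht]

theorem IsSecondDerivMeasures.tendsto_heatFlow_cutoff_sub_div
    (hμ : IsSecondDerivMeasures d f μp μn) (hf : Continuous f) (hχ : ContDiff ℝ (⊤ : ℕ∞) χ)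
    (hsupp : HasCompactSupport χ) (hone : χ =ᶠ[𝓝 x] 1) {Dp Dn : Fin d → ℝ}
    (hp : ∀ i, Tendsto (heatFlow (μp i i) χ x) (𝓝[>] 0) (𝓝 (Dp i)))
    (hn : ∀ i, Tendsto (heatFlow (μn i i) χ x) (𝓝[>] 0) (𝓝 (Dn i))) :
    Tendsto (fun t => (heatFlow volume (fun w => f w * χ w) x t - f x) / t) (𝓝[>] 0)
      (𝓝 (1 / 2 * ∑ i, (Dp i - Dn i))) := by
  have hcont : Continuous fun w => f w * χ w := hf.mul hχ.continuous
  have hcompact : HasCompactSupport fun w => f w * χ w := hsupp.mul_left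
  have hinitial : Tendsto (fun t => heatFlow volume (fun w => f w * χ w) x t - f x)
      (𝓝[>] 0) (𝓝 0) := by
    have hflow := (tendsto_heatFlow_volume (x := x)
      (hcont.integrable_of_hasCompactSupport hcompact) hcont.continuousAt).sub_const (f x)
    rwa [hone.eq_of_nhds, Pi.one_apply, mul_one, sub_self] at hflow
  refine HasDerivAt.lhopital_zero_nhdsGT (g' := fun _ => 1) ?_
    (.of_forall fun t => hasDerivAt_id t) (.of_forall fun _ => one_ne_zero) hinitial
    (tendsto_id.mono_left nhdsWithin_le_nhds)
    (by simpa only [div_one] using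
      hμ.tendsto_integral_mul_laplacian_heatKernel hf hχ hsupp hone hp hn)
  filter_upwards [self_mem_nhdsWithin] with t ht
  exact (hasDerivAt_heatFlow hcont hcompact ht).sub_const (f x)

theorem IsSecondDerivMeasures.tendsto_heatFlow_sub_div
    (hμ : IsSecondDerivMeasures d f μp μn) (hf : Continuous f)
    (hint : Integrable fun w => f w * Real.exp (-b * ‖w - x‖ ^ 2)) {Dp Dn : Fin d → ℝ}
    (hp : ∀ i, Tendsto (fun r => (μp i i).real (closedBall x r) / volume.real (closedBall x r))
      (𝓝[>] 0) (𝓝 (Dp i)))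
    (hn : ∀ i, Tendsto (fun r => (μn i i).real (closedBall x r) / volume.real (closedBall x r))
      (𝓝[>] 0) (𝓝 (Dn i))) :
    Tendsto (fun t => (heatFlow volume f x t - f x) / t) (𝓝[>] 0)
      (𝓝 (1 / 2 * ∑ i, (Dp i - Dn i))) := by
  have hμp := hμ.1
  have hμn := hμ.2.1
  let χ : ContDiffBump x := ⟨1, 2, one_pos, one_lt_two⟩
  have hχ_integrable (μ : Measure (EuclideanSpace ℝ (Fin d))) [IsLocallyFiniteMeasure μ] :
      Integrable χ μ := χ.continuous.integrable_of_hasCompactSupport χ.hasCompactSupport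
  have hcutoff := hμ.tendsto_heatFlow_cutoff_sub_div hf χ.contDiff χ.hasCompactSupport
    χ.eventuallyEq_one
    (fun i => tendsto_heatFlow_of_tendsto_measure_closedBall_ratio (hp i) (hχ_integrable _)
      χ.eventuallyEq_one)
    (fun i => tendsto_heatFlow_of_tendsto_measure_closedBall_ratio (hn i) (hχ_integrable _)
      χ.eventuallyEq_one)
  have htail := tendsto_heatFlow_sub_heatFlow_mul_div hint χ.continuous.aestronglyMeasurable
    (fun w => (Real.norm_of_nonneg χ.nonneg).trans_le χ.le_one) χ.eventuallyEq_one
  simpa only [← add_div, sub_add_sub_cancel', add_zero] using hcutoff.add htail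

end SecondDerivMeasures

section Subgradient

theorem convexOn_of_subgradient {E : Type*} [NormedAddCommGroup E] [InnerProductSpace ℝ E]
    {f : E → ℝ} {p : E → E} (hp : ∀ x y, f x + ⟪p x, y - x⟫ ≤ f y) : ConvexOn ℝ Set.univ f := by
  refine ⟨convex_univ, fun x _ y _ a b ha hb hab => ?_⟩
  set z := a • x + b • y with hz
  have hcancel : a * ⟪p z, x - z⟫ + b * ⟪p z, y - z⟫ = 0 := by
    rw [← real_inner_smul_right, ← real_inner_smul_right, ← inner_add_right, smul_sub, smul_sub,
      sub_add_sub_comm, ← hz, ← add_smul, hab, one_smul, sub_self, inner_zero_right]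
  calc f z = a * (f z + ⟪p z, x - z⟫) + b * (f z + ⟪p z, y - z⟫) := by
        linear_combination -hcancel - f z * hab
    _ ≤ a • f x + b • f y := by
        simp only [smul_eq_mul]
        gcongr
        exacts [hp z x, hp z y]

variable {d : ℕ} {t : ℝ} {x v : EuclideanSpace ℝ (Fin d)} {f : EuclideanSpace ℝ (Fin d) → ℝ}

theorem integrable_inner_mul_heatKernel (v : EuclideanSpace ℝ (Fin d)) (ht : 0 < t) :
    Integrable fun y => ⟪v, y⟫ * heatKernel d t y := by
  have hgauss := integrable_mul_exp_of_linear_growth (b := 1 / (2 * t)) (g := fun y => ⟪v, y⟫)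
    (A := ‖v‖) (B := 0) (by fun_prop) (fun y => by simpa using abs_real_inner_le_norm v y)
    (by positivity)
  simpa using integrable_mul_heatKernel (x := 0) (by simpa using hgauss) ht (by field_simp; rfl)

theorem integral_abs_increment_mul_heatKernel (hv : ∀ y, f x + ⟪v, y - x⟫ ≤ f y) (ht : 0 < t)
    (hint : Integrable fun w => f w * heatKernel d t (w - x)) :
    ∫ y, |f (x + y) - f x - ⟪v, y⟫| * heatKernel d t y = heatFlow volume f x t - f x := by
  have hexpand (y : EuclideanSpace ℝ (Fin d)) : |f (x + y) - f x - ⟪v, y⟫| * heatKernel d t y =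
      f (x + y) * heatKernel d t y - f x * heatKernel d t y - ⟪v, y⟫ * heatKernel d t y := by
    have hsupport := hv (x + y)
    rw [add_sub_cancel_left] at hsupport
    rw [abs_of_nonneg (by linarith)]
    ring
  have hshift : Integrable fun y => f (x + y) * heatKernel d t y := by
    simpa using hint.comp_add_left x
  have hflow : ∫ y, f (x + y) * heatKernel d t y = heatFlow volume f x t := by
    simpa only [heatFlow, add_sub_cancel_left] using
      integral_add_left_eq_self (fun w => f w * heatKernel d t (w - x)) x
  have hkernel := (integrable_heatKernel (d := d) ht).const_mul (f x)
  have hincrement : Integrable fun y => f (x + y) * heatKernel d t y - f x * heatKernel d t y :=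
    hshift.sub hkernel
  simp only [hexpand]
  rw [integral_sub hincrement (integrable_inner_mul_heatKernel v ht),
    integral_sub hshift hkernel, hflow, integral_const_mul, integral_heatKernel ht,
    integral_inner_mul_heatKernel, mul_one, sub_zero]

end Subgradient

theorem first_order_increment_average_tendsto_half_trace_general (d : ℕ)
    (f : EuclideanSpace ℝ (Fin d) → ℝ) {b : ℝ} (hb : 0 < b)
    (hint : Integrable fun y => f y * Real.exp (-b * ‖y‖ ^ 2))
    (p : EuclideanSpace ℝ (Fin d) → EuclideanSpace ℝ (Fin d))
    (hp : ∀ x y, f x + ⟪p x, y - x⟫ ≤ f y)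
    (μp μn : Fin d → Fin d → Measure (EuclideanSpace ℝ (Fin d)))
    (hμ : IsSecondDerivMeasures d f μp μn) :
    ∀ᵐ x, Tendsto (fun t : ℝ => (1 / t) * ∫ y, |f (x + y) - f x - ⟪p x, y⟫| * heatKernel d t y)
      (𝓝[>] 0) (𝓝 ((1 / 2) * Matrix.trace (densityMatrix d μp μn x))) := by
  have hμp := hμ.1
  have hμn := hμ.2.1
  have hf : Continuous f :=
    continuousOn_univ.1 ((convexOn_of_subgradient hp).continuousOn isOpen_univ)
  filter_upwards [ae_all_iff.2 fun i => ae_tendsto_measure_closedBall_ratio (μp i i),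
    ae_all_iff.2 fun i => ae_tendsto_measure_closedBall_ratio (μn i i)] with x hDp hDn
  have hint_x := integrable_mul_exp_sub hb.le hint x
  refine (hμ.tendsto_heatFlow_sub_div hf hint_x hDp hDn).congr' ?_
  filter_upwards [self_mem_nhdsWithin, eventually_mul_le_one (2 * (2 * b))] with t ht hbt
  rw [integral_abs_increment_mul_heatKernel (hp x) ht (integrable_mul_heatKernel hint_x ht hbt),
    one_div_mul_eq_div]

theorem first_order_increment_average_tendsto_half_trace (d : ℕ)
    (f : EuclideanSpace ℝ (Fin d) → ℝ) (hf : ConvexOn ℝ Set.univ f)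
    (A B : ℝ) (hgrowth : ∀ y, |f y| ≤ A * ‖y‖ + B)
    (p : EuclideanSpace ℝ (Fin d) → EuclideanSpace ℝ (Fin d))
    (hp : ∀ x y, f x + ⟪p x, y - x⟫ ≤ f y)
    (μp μn : Fin d → Fin d → Measure (EuclideanSpace ℝ (Fin d)))
    (hμ : IsSecondDerivMeasures d f μp μn) :
    ∀ᵐ x ∂(volume : Measure (EuclideanSpace ℝ (Fin d))),
      Filter.Tendsto
        (fun t : ℝ => (1 / t) * ∫ y, |f (x + y) - f x - ⟪p x, y⟫| * heatKernel d t y)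
        (nhdsWithin 0 (Set.Ioi 0))
        (nhds ((1 / 2) * Matrix.trace (densityMatrix d μp μn x))) := by
  exact first_order_increment_average_tendsto_half_trace_general d f one_pos
    (integrable_mul_exp_of_linear_growth
      (continuousOn_univ.1 (hf.continuousOn isOpen_univ)).aestronglyMeasurable hgrowth one_pos)
    p hp μp μn hμ
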